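/- For every unit spinor φ ∈ ℝ⁸ one has the orthogonal direct-sum decomposition ℝ⁸ = ℝφ ⊕ ℝ(jφ) ⊕ V_φ, where V_φ = {c(X)φ : X ∈ ℝ⁶}: the three subspaces are pairwise orthogonal, the linear map X ↦ c(X)φ from ℝ⁶ to ℝ⁸ is injective (so dim V_φ = 6), and together the three subspaces span ℝ⁸. -/

import Mathlib

/- STATEMENT 4: For every unit spinor φ ∈ ℝ⁸ one has the orthogonal direct-sum
decomposition ℝ⁸ = ℝφ ⊕ ℝ(jφ) ⊕ V_φ with V_φ = {c(X)φ : X ∈ ℝ⁶}: the three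
subspaces are pairwise orthogonal, X ↦ c(X)φ is injective, and together they
span ℝ⁸. -/

open Matrix
open scoped RealInnerProductSpace

noncomputable section

namespace Stmt4

def E (i j : Fin 8) : Matrix (Fin 8) (Fin 8) ℝ :=
  Matrix.of fun k l => if k = i ∧ l = j then (-1 : ℝ) else if k = j ∧ l = i then 1 else 0

def e : Fin 6 → Matrix (Fin 8) (Fin 8) ℝ :=
  ![E 0 7 + E 1 6 - E 2 5 - E 3 4,
    -E 0 6 + E 1 7 + E 2 4 - E 3 5,
    -E 0 5 + E 1 4 - E 2 7 + E 3 6,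
    -E 0 4 - E 1 5 - E 2 6 - E 3 7,
    -E 0 2 - E 1 3 + E 4 6 + E 5 7,
    E 0 3 - E 1 2 - E 4 7 + E 5 6]

/-- `j = e₁·e₂·e₃·e₄·e₅·e₆`. -/
def jmat : Matrix (Fin 8) (Fin 8) ℝ := e 0 * e 1 * e 2 * e 3 * e 4 * e 5

abbrev V8 := EuclideanSpace ℝ (Fin 8)
abbrev V6 := EuclideanSpace ℝ (Fin 6)

/-- Clifford multiplication by the vector `X ∈ ℝ⁶`. -/
def c (X : V6) : Matrix (Fin 8) (Fin 8) ℝ := ∑ a, X a • e a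

/-- Action of an 8×8 matrix on a spinor in `Δ₆ = ℝ⁸`. -/
def act (M : Matrix (Fin 8) (Fin 8) ℝ) (ψ : V8) : V8 :=
  (EuclideanSpace.equiv (Fin 8) ℝ).symm (M.mulVec (EuclideanSpace.equiv (Fin 8) ℝ ψ))

/- Clifford multiplication by a vector is skew, squares to `-‖X‖²`, and anticommutes with `j`,
because the number of generators is even. Reversing a product of six generators costs fifteen signs
and transposing its factors six more, so `j` is skew and orthogonal. Hence `j`, `c(X)` and `j c(X)`
are all skew, which gives the three orthogonality relations. Each summand embeds isometrically up
to the factor `‖φ‖`, so `(a, b, X) ↦ aφ + bjφ + c(X)φ` is injective, and `1 + 1 + 6 = 8` makes it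
surjective. -/

lemma odd_choose_two_of_mod_four_eq_two {n : ℕ} (hn : n % 4 = 2) : Odd ((n + 1).choose 2) := by
  obtain ⟨k, rfl⟩ : ∃ k, n = 4 * k + 2 := ⟨n / 4, by lia⟩
  have hchoose : (4 * k + 2 + 1).choose 2 = (4 * k + 3) * (2 * k + 1) := by
    rw [Nat.choose_two_right]
    exact Nat.div_eq_of_eq_mul_left two_pos (by rw [Nat.add_sub_cancel]; ring)
  rw [hchoose]
  exact Odd.mul ⟨2 * k + 1, by ring⟩ ⟨k, rfl⟩

section Anticommute

variable {A : Type*} [Ring A]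

/-- Two ring elements *anticommute* if `x * y = -(y * x)`; the sign-twisted form of `Commute`. -/
def Anticommute (x y : A) : Prop := x * y = -(y * x)

lemma mul_list_prod_of_forall_anticommute {x : A} {l : List A} (hx : ∀ y ∈ l, Anticommute x y) :
    x * l.prod = (-1 : ℤ) ^ l.length • (l.prod * x) := by
  induction l with
  | nil => simp
  | cons y l ih =>
    rw [List.forall_mem_cons] at hx
    calc x * (y :: l).prod = -(y * (x * l.prod)) := by
          rw [List.prod_cons, ← mul_assoc, hx.1, neg_mul, mul_assoc]
      _ = (-1 : ℤ) ^ (y :: l).length • ((y :: l).prod * x) := by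
          rw [ih hx.2, mul_smul_comm, List.length_cons, pow_succ, mul_neg_one, neg_smul,
            List.prod_cons, mul_assoc]

lemma mul_list_prod_of_mem_of_pairwise_anticommute {l : List A} (hl : l.Pairwise Anticommute)
    {x : A} (hx : x ∈ l) :
    x * l.prod = (-1 : ℤ) ^ (l.length + 1) • (l.prod * x) := by
  induction l with
  | nil => simp at hx
  | cons y l ih =>
    rw [List.pairwise_cons] at hl
    rcases List.mem_cons.mp hx with rfl | hxl
    · rw [List.prod_cons, mul_assoc, mul_list_prod_of_forall_anticommute hl.1, mul_smul_comm,
        List.length_cons, pow_succ, pow_succ, mul_neg_one, mul_neg_one, neg_neg]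
    · have hxy : x * y = -(y * x) := by rw [hl.1 x hxl, neg_neg]
      calc x * (y :: l).prod = -(y * (x * l.prod)) := by
            rw [List.prod_cons, ← mul_assoc, hxy, neg_mul, mul_assoc]
        _ = (-1 : ℤ) ^ ((y :: l).length + 1) • ((y :: l).prod * x) := by
            rw [ih hl.2 hxl, mul_smul_comm, List.length_cons, pow_succ _ (l.length + 1),
              mul_neg_one, neg_smul, List.prod_cons, mul_assoc]

lemma Anticommute.mul_mem_skewAdjoint [StarRing A] {x y : A} (hxy : Anticommute x y)
    (hx : x ∈ skewAdjoint A) (hy : y ∈ skewAdjoint A) : x * y ∈ skewAdjoint A := by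
  rw [skewAdjoint.mem_iff] at *
  rw [star_mul, hx, hy, neg_mul_neg, hxy, neg_neg]

lemma star_list_prod_of_pairwise_anticommute [StarRing A] {l : List A}
    (hskew : ∀ x ∈ l, x ∈ skewAdjoint A) (hl : l.Pairwise Anticommute) :
    star l.prod = (-1 : ℤ) ^ (l.length + 1).choose 2 • l.prod := by
  induction l with
  | nil => simp
  | cons x l ih =>
    rw [List.forall_mem_cons, skewAdjoint.mem_iff] at hskew
    rw [List.pairwise_cons] at hl
    have hchoose : (l.length + 2).choose 2 = l.length + 1 + (l.length + 1).choose 2 := by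
      rw [Nat.choose_succ_succ' (l.length + 1) 1, Nat.choose_one_right]
    have hsign : -(-1 : ℤ) ^ (l.length + 1).choose 2 =
        (-1) ^ (l.length + 2).choose 2 * (-1) ^ l.length := by
      have hsq : (-1 : ℤ) ^ l.length * (-1) ^ l.length = 1 := by
        rw [← mul_pow, neg_one_mul, neg_neg, one_pow]
      rw [hchoose, pow_add, pow_succ]
      linear_combination (-1 : ℤ) ^ (l.length + 1).choose 2 * hsq
    calc star (x :: l).prod = (-1 : ℤ) ^ (l.length + 1).choose 2 • -(l.prod * x) := by
          rw [List.prod_cons, star_mul, ih hskew.2 hl.2, hskew.1, smul_mul_assoc, mul_neg]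
      _ = (-1 : ℤ) ^ (l.length + 2).choose 2 • (x * l.prod) := by
          rw [mul_list_prod_of_forall_anticommute hl.1, smul_smul, ← hsign, smul_neg, neg_smul]
      _ = (-1 : ℤ) ^ ((x :: l).length + 1).choose 2 • (x :: l).prod := by
          rw [List.length_cons, List.prod_cons]

end Anticommute

/-- The *volume element* `γ(b₁) ⋯ γ(bₙ)` of a linear map along a tuple of vectors. For an
orthonormal basis of a Euclidean space and Clifford multiplication `γ`, it is the action of the
volume form; the matrix `j` is the case of the standard basis of `ℝ⁶`. -/
def volumeElement {V A : Type*} [AddCommGroup V] [Module ℝ V] [Ring A] [Algebra ℝ A] {n : ℕ}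
    (γ : V →ₗ[ℝ] A) (b : Fin n → V) : A :=
  (List.ofFn fun i => γ (b i)).prod

section Clifford

variable {V A : Type*} [NormedAddCommGroup V] [InnerProductSpace ℝ V]
  [Ring A] [StarRing A] [Algebra ℝ A] {n : ℕ} {γ : V →ₗ[ℝ] A}

/-- A *Clifford map* from a Euclidean space to a real star algebra: the restriction to vectors of a
representation of the Clifford algebra (with the convention `v² = -‖v‖²`) in which vectors act
skew-adjointly. -/
structure IsCliffordMap (γ : V →ₗ[ℝ] A) : Prop where
  star_apply (v : V) : star (γ v) = -γ v
  mul_self (v : V) : γ v * γ v = -(‖v‖ ^ 2 • (1 : A))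

namespace IsCliffordMap

lemma anticommute_of_inner_eq_zero (hγ : IsCliffordMap γ) {v w : V} (hvw : ⟪v, w⟫ = 0) :
    Anticommute (γ v) (γ w) := by
  have hsum : (γ v + γ w) * (γ v + γ w) = γ v * γ v + γ w * γ w := by
    rw [← map_add, hγ.mul_self, hγ.mul_self, hγ.mul_self, norm_add_sq_real, hvw]
    module
  rw [Anticommute, ← add_eq_zero_iff_eq_neg]
  calc γ v * γ w + γ w * γ v
      = (γ v + γ w) * (γ v + γ w) - (γ v * γ v + γ w * γ w) := by noncomm_ring
    _ = 0 := by rw [hsum, sub_self]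

lemma apply_mem_skewAdjoint (hγ : IsCliffordMap γ) (v : V) : γ v ∈ skewAdjoint A :=
  skewAdjoint.mem_iff.mpr (hγ.star_apply v)

lemma apply_mem_unitary (hγ : IsCliffordMap γ) {v : V} (hv : ‖v‖ = 1) : γ v ∈ unitary A := by
  simp [Unitary.mem_iff, hγ.star_apply, hγ.mul_self, hv]

lemma pairwise_anticommute_ofFn (hγ : IsCliffordMap γ) {b : Fin n → V} (hb : Orthonormal ℝ b) :
    (List.ofFn fun i => γ (b i)).Pairwise Anticommute :=
  List.pairwise_ofFn.mpr fun _ _ hij => hγ.anticommute_of_inner_eq_zero (hb.2 hij.ne)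

lemma volumeElement_mem_unitary (hγ : IsCliffordMap γ) {b : Fin n → V} (hb : Orthonormal ℝ b) :
    volumeElement γ b ∈ unitary A :=
  list_prod_mem <| List.forall_mem_ofFn_iff.mpr fun i => hγ.apply_mem_unitary (hb.1 i)

lemma star_volumeElement (hγ : IsCliffordMap γ) {b : Fin n → V} (hb : Orthonormal ℝ b) :
    star (volumeElement γ b) = (-1 : ℤ) ^ (n + 1).choose 2 • volumeElement γ b := by
  have hskew : ∀ x ∈ List.ofFn fun i => γ (b i), x ∈ skewAdjoint A :=
    List.forall_mem_ofFn_iff.mpr fun i => hγ.apply_mem_skewAdjoint (b i)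
  simpa only [volumeElement, List.length_ofFn] using
    star_list_prod_of_pairwise_anticommute hskew (hγ.pairwise_anticommute_ofFn hb)

lemma apply_mul_volumeElement (hγ : IsCliffordMap γ) (b : OrthonormalBasis (Fin n) ℝ V) (v : V) :
    γ v * volumeElement γ b = (-1 : ℤ) ^ (n + 1) • (volumeElement γ b * γ v) := by
  have hbasis (i : Fin n) :
      γ (b i) * volumeElement γ b = (-1 : ℤ) ^ (n + 1) • (volumeElement γ b * γ (b i)) := by
    simpa only [volumeElement, List.length_ofFn] using
      mul_list_prod_of_mem_of_pairwise_anticommute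
        (hγ.pairwise_anticommute_ofFn b.orthonormal) (List.mem_ofFn.mpr ⟨i, rfl⟩)
  rw [← b.sum_repr v]
  simp only [map_sum, map_smul, Finset.sum_mul, Finset.mul_sum, Finset.smul_sum, smul_mul_assoc,
    mul_smul_comm, hbasis, smul_comm _ ((-1 : ℤ) ^ (n + 1))]

lemma anticommute_volumeElement (hγ : IsCliffordMap γ) (b : OrthonormalBasis (Fin n) ℝ V)
    (hn : Even n) (v : V) : Anticommute (γ v) (volumeElement γ b) := by
  rw [Anticommute, hγ.apply_mul_volumeElement b, hn.add_one.neg_one_pow, neg_one_smul]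

lemma volumeElement_mem_skewAdjoint (hγ : IsCliffordMap γ) {b : Fin n → V}
    (hb : Orthonormal ℝ b) (hn : n % 4 = 2) : volumeElement γ b ∈ skewAdjoint A := by
  rw [skewAdjoint.mem_iff, hγ.star_volumeElement hb,
    (odd_choose_two_of_mod_four_eq_two hn).neg_one_pow, neg_one_smul]

end IsCliffordMap

end Clifford

section SkewAdjoint

variable {S : Type*} [NormedAddCommGroup S] [InnerProductSpace ℝ S] [CompleteSpace S]
  {T J : S →L[ℝ] S}

lemma inner_apply_left_of_mem_skewAdjoint (hT : T ∈ skewAdjoint (S →L[ℝ] S)) (x y : S) :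
    ⟪T x, y⟫ = -⟪x, T y⟫ := by
  rw [← ContinuousLinearMap.adjoint_inner_right, ← ContinuousLinearMap.star_eq_adjoint,
    skewAdjoint.mem_iff.mp hT, _root_.neg_apply, inner_neg_right]

lemma inner_apply_self_of_mem_skewAdjoint (hT : T ∈ skewAdjoint (S →L[ℝ] S)) (x : S) :
    ⟪T x, x⟫ = 0 := by
  have h := inner_apply_left_of_mem_skewAdjoint hT x x
  rwa [real_inner_comm (T x) x, self_eq_neg] at h

lemma inner_apply_apply_of_anticommute (hT : T ∈ skewAdjoint (S →L[ℝ] S))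
    (hJ : J ∈ skewAdjoint (S →L[ℝ] S)) (hTJ : Anticommute T J) (x : S) : ⟪T x, J x⟫ = 0 := by
  have hTJx : ⟪(T * J) x, x⟫ = 0 :=
    inner_apply_self_of_mem_skewAdjoint (hTJ.mul_mem_skewAdjoint hT hJ) x
  rw [inner_apply_left_of_mem_skewAdjoint hT, real_inner_comm, neg_eq_zero]
  exact hTJx

end SkewAdjoint

section Spinor

variable {V S : Type*} [NormedAddCommGroup V] [InnerProductSpace ℝ V]
  [NormedAddCommGroup S] [InnerProductSpace ℝ S]

/-- The linear map `(a, b, X) ↦ aφ + bJφ + γ(X)φ`: it is injective when the sum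
`ℝφ + ℝ(Jφ) + V_φ` is direct and `X ↦ γ(X)φ` is injective, and surjective when the sum is the whole
spinor space. -/
def spinorFrame (γ : V →ₗ[ℝ] S →L[ℝ] S) (J : S →L[ℝ] S) (φ : S) : ℝ × ℝ × V →ₗ[ℝ] S where
  toFun p := p.1 • φ + p.2.1 • J φ + γ p.2.2 φ
  map_add' p q := by
    simp only [Prod.fst_add, Prod.snd_add, map_add, _root_.add_apply]
    module
  map_smul' r p := by
    simp only [Prod.smul_fst, Prod.smul_snd, map_smul, _root_.smul_apply, smul_eq_mul,
      RingHom.id_apply]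
    module

variable [CompleteSpace S] {γ : V →ₗ[ℝ] S →L[ℝ] S}

lemma IsCliffordMap.norm_apply_apply (hγ : IsCliffordMap γ) (X : V) (φ : S) :
    ‖γ X φ‖ = ‖X‖ * ‖φ‖ := by
  have hsq : γ X (γ X φ) = -(‖X‖ ^ 2 • φ) := DFunLike.congr_fun (hγ.mul_self X) φ
  refine (sq_eq_sq₀ (norm_nonneg _) (by positivity)).mp ?_
  calc ‖γ X φ‖ ^ 2 = ⟪γ X φ, γ X φ⟫ := (real_inner_self_eq_norm_sq _).symm
    _ = ‖X‖ ^ 2 * ⟪φ, φ⟫ := by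
      rw [inner_apply_left_of_mem_skewAdjoint (hγ.apply_mem_skewAdjoint X), hsq,
        inner_neg_right, neg_neg, real_inner_smul_right]
    _ = (‖X‖ * ‖φ‖) ^ 2 := by rw [real_inner_self_eq_norm_sq, mul_pow]

lemma IsCliffordMap.apply_injective (hγ : IsCliffordMap γ) {φ : S} (hφ : φ ≠ 0) :
    Function.Injective fun X => γ X φ := by
  intro X Y hXY
  have h : ‖X - Y‖ * ‖φ‖ = 0 := by
    rw [← hγ.norm_apply_apply, map_sub, _root_.sub_apply, sub_eq_zero.mpr hXY, norm_zero]
  simpa [hφ, sub_eq_zero] using h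

variable {J : S →L[ℝ] S}

lemma IsCliffordMap.norm_spinorFrame_sq (hγ : IsCliffordMap γ) (hJ : J ∈ skewAdjoint (S →L[ℝ] S))
    (hJu : J ∈ unitary (S →L[ℝ] S)) (hγJ : ∀ X, Anticommute (γ X) J) (φ : S) (p : ℝ × ℝ × V) :
    ‖spinorFrame γ J φ p‖ ^ 2 = (p.1 ^ 2 + p.2.1 ^ 2 + ‖p.2.2‖ ^ 2) * ‖φ‖ ^ 2 := by
  obtain ⟨a, b, X⟩ := p
  have hφJ : ⟪φ, J φ⟫ = 0 := by
    rw [real_inner_comm, inner_apply_self_of_mem_skewAdjoint hJ]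
  have hφX : ⟪φ, γ X φ⟫ = 0 := by
    rw [real_inner_comm, inner_apply_self_of_mem_skewAdjoint (hγ.apply_mem_skewAdjoint X)]
  have hJX : ⟪J φ, γ X φ⟫ = 0 := by
    rw [real_inner_comm, inner_apply_apply_of_anticommute (hγ.apply_mem_skewAdjoint X) hJ (hγJ X)]
  have hJnorm : ‖J φ‖ = ‖φ‖ := J.norm_map_of_mem_unitary hJu φ
  calc ‖a • φ + b • J φ + γ X φ‖ ^ 2 = ‖a • φ‖ ^ 2 + ‖b • J φ‖ ^ 2 + ‖γ X φ‖ ^ 2 := by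
        simp [norm_add_sq_real, inner_add_left, real_inner_smul_left, real_inner_smul_right, hφJ,
          hφX, hJX]
    _ = (a ^ 2 + b ^ 2 + ‖X‖ ^ 2) * ‖φ‖ ^ 2 := by
        rw [hγ.norm_apply_apply, norm_smul, norm_smul, hJnorm, mul_pow, mul_pow, mul_pow,
          Real.norm_eq_abs, Real.norm_eq_abs, sq_abs, sq_abs]
        ring

lemma IsCliffordMap.spinorFrame_injective (hγ : IsCliffordMap γ) (hJ : J ∈ skewAdjoint (S →L[ℝ] S))
    (hJu : J ∈ unitary (S →L[ℝ] S)) (hγJ : ∀ X, Anticommute (γ X) J) {φ : S} (hφ : φ ≠ 0) :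
    Function.Injective (spinorFrame γ J φ) := by
  rw [injective_iff_map_eq_zero]
  rintro ⟨a, b, X⟩ hp
  have hnorm := hγ.norm_spinorFrame_sq hJ hJu hγJ φ (a, b, X)
  rw [hp, norm_zero, zero_pow two_ne_zero, zero_eq_mul] at hnorm
  have hsum : a ^ 2 + b ^ 2 + ‖X‖ ^ 2 = 0 := hnorm.resolve_right (by simpa using hφ)
  rw [add_eq_zero_iff_of_nonneg (by positivity) (by positivity),
    add_eq_zero_iff_of_nonneg (sq_nonneg a) (sq_nonneg b)] at hsum
  simpa [and_assoc] using hsum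

lemma IsCliffordMap.spinorFrame_surjective [FiniteDimensional ℝ V] [FiniteDimensional ℝ S]
    (hγ : IsCliffordMap γ) (hJ : J ∈ skewAdjoint (S →L[ℝ] S)) (hJu : J ∈ unitary (S →L[ℝ] S))
    (hγJ : ∀ X, Anticommute (γ X) J) (hdim : Module.finrank ℝ S = Module.finrank ℝ V + 2) {φ : S}
    (hφ : φ ≠ 0) : Function.Surjective (spinorFrame γ J φ) := by
  have hfinrank : Module.finrank ℝ (ℝ × ℝ × V) = Module.finrank ℝ S := by
    rw [Module.finrank_prod, Module.finrank_prod, Module.finrank_self, hdim]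
    ring
  exact (LinearMap.injective_iff_surjective_of_finrank_eq_finrank hfinrank).mp
    (hγ.spinorFrame_injective hJ hJu hγJ hφ)

theorem spinor_decomposition_dim6_general {n : ℕ} (hγ : IsCliffordMap γ)
    (b : OrthonormalBasis (Fin n) ℝ V) (hn : n % 4 = 2) (hdim : Module.finrank ℝ S = n + 2)
    (φ : S) (hφ : φ ≠ 0) :
    ⟪φ, volumeElement γ b φ⟫ = 0 ∧
    (∀ X : V, ⟪γ X φ, φ⟫ = 0 ∧ ⟪γ X φ, volumeElement γ b φ⟫ = 0) ∧
    Function.Injective (fun X : V => γ X φ) ∧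
    (∀ ψ : S, ∃ (r s : ℝ) (X : V), ψ = r • φ + s • volumeElement γ b φ + γ X φ) := by
  set J := volumeElement γ b
  have hJ : J ∈ skewAdjoint (S →L[ℝ] S) := hγ.volumeElement_mem_skewAdjoint b.orthonormal hn
  have hJu : J ∈ unitary (S →L[ℝ] S) := hγ.volumeElement_mem_unitary b.orthonormal
  have hγJ (X : V) : Anticommute (γ X) J :=
    hγ.anticommute_volumeElement b (Nat.even_iff.mpr (by lia)) X
  have hfinrank : Module.finrank ℝ V = n := by
    rw [Module.finrank_eq_card_basis b.toBasis, Fintype.card_fin]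
  have : FiniteDimensional ℝ V := b.toBasis.finiteDimensional_of_finite
  have : FiniteDimensional ℝ S := Module.finite_of_finrank_pos (by lia)
  refine ⟨?_, fun X => ⟨?_, ?_⟩, hγ.apply_injective hφ, fun ψ => ?_⟩
  · rw [real_inner_comm, inner_apply_self_of_mem_skewAdjoint hJ]
  · exact inner_apply_self_of_mem_skewAdjoint (hγ.apply_mem_skewAdjoint X) φ
  · exact inner_apply_apply_of_anticommute (hγ.apply_mem_skewAdjoint X) hJ (hγJ X) φ
  · obtain ⟨⟨r, s, X⟩, hψ⟩ :=
      hγ.spinorFrame_surjective hJ hJu hγJ (by rw [hdim, hfinrank]) hφ ψ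
    exact ⟨r, s, X, hψ.symm⟩

end Spinor

lemma E_eq_single_sub_single {i j : Fin 8} (hij : i ≠ j) :
    E i j = Matrix.single j i 1 - Matrix.single i j 1 := by
  ext k l
  simp only [E, Matrix.of_apply, Matrix.sub_apply, Matrix.single_apply]
  grind

lemma transpose_E {i j : Fin 8} (hij : i ≠ j) : (E i j)ᵀ = -E i j := by
  rw [E_eq_single_sub_single hij, Matrix.transpose_sub, Matrix.transpose_single,
    Matrix.transpose_single, neg_sub]

lemma E_mulVec {i j : Fin 8} (hij : i ≠ j) (v : Fin 8 → ℝ) :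
    E i j *ᵥ v = Pi.single j (v i) - Pi.single i (v j) := by
  rw [E_eq_single_sub_single hij, Matrix.sub_mulVec, Matrix.single_mulVec, Matrix.single_mulVec,
    one_mul, one_mul]
  rfl

lemma transpose_e (a : Fin 6) : (e a)ᵀ = -e a := by
  fin_cases a <;> simp [e, transpose_E] <;> abel

lemma transpose_c (X : V6) : (c X)ᵀ = -c X := by
  simp [c, Matrix.transpose_sum, transpose_e]

lemma c_mulVec (X : V6) (v : Fin 8 → ℝ) : c X *ᵥ v =
    ![-X 0 * v 7 + X 1 * v 6 + X 2 * v 5 + X 3 * v 4 + X 4 * v 2 - X 5 * v 3,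
      -X 0 * v 6 - X 1 * v 7 - X 2 * v 4 + X 3 * v 5 + X 4 * v 3 + X 5 * v 2,
      X 0 * v 5 - X 1 * v 4 + X 2 * v 7 + X 3 * v 6 - X 4 * v 0 - X 5 * v 1,
      X 0 * v 4 + X 1 * v 5 - X 2 * v 6 + X 3 * v 7 - X 4 * v 1 + X 5 * v 0,
      -X 0 * v 3 + X 1 * v 2 + X 2 * v 1 - X 3 * v 0 - X 4 * v 6 + X 5 * v 7,
      -X 0 * v 2 - X 1 * v 3 - X 2 * v 0 - X 3 * v 1 - X 4 * v 7 - X 5 * v 6,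
      X 0 * v 1 - X 1 * v 0 + X 2 * v 3 - X 3 * v 2 + X 4 * v 4 + X 5 * v 5,
      X 0 * v 0 + X 1 * v 1 - X 2 * v 2 - X 3 * v 3 + X 4 * v 5 - X 5 * v 4] := by
  simp only [c, e, Fin.sum_univ_six, Matrix.add_mulVec, Matrix.smul_mulVec]
  ext i
  fin_cases i <;> simp [Matrix.add_mulVec, Matrix.sub_mulVec, Matrix.neg_mulVec, E_mulVec] <;> ring

lemma c_mul_self (X : V6) : c X * c X = -(‖X‖ ^ 2 • (1 : Matrix (Fin 8) (Fin 8) ℝ)) := by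
  refine Matrix.ext_iff_mulVec.mpr fun v => ?_
  have hX := EuclideanSpace.real_norm_sq_eq X
  rw [Fin.sum_univ_six] at hX
  rw [← Matrix.mulVec_mulVec, c_mulVec X (c X *ᵥ v), c_mulVec X v, hX]
  ext i
  fin_cases i <;> simp [Matrix.neg_mulVec, Matrix.smul_mulVec] <;> ring

/-- Clifford multiplication `c`, as a linear map into the operators on the spinor space. -/
def cliffordMul : V6 →ₗ[ℝ] V8 →L[ℝ] V8 where
  toFun X := Matrix.toEuclideanCLM (𝕜 := ℝ) (c X)
  map_add' X Y := by simp [c, add_smul, Finset.sum_add_distrib]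
  map_smul' r X := by simp [c, mul_smul, Finset.smul_sum]

lemma cliffordMul_eq_toEuclideanCLM (X : V6) :
    cliffordMul X = Matrix.toEuclideanCLM (𝕜 := ℝ) (c X) := rfl

lemma cliffordMul_apply (X : V6) (φ : V8) : cliffordMul X φ = act (c X) φ := rfl

lemma isCliffordMap_cliffordMul : IsCliffordMap cliffordMul where
  star_apply X := by
    have hstar : star (c X) = -c X := transpose_c X
    rw [cliffordMul_eq_toEuclideanCLM, ← map_star, hstar, map_neg]
  mul_self X := by
    rw [cliffordMul_eq_toEuclideanCLM, ← map_mul, c_mul_self, map_neg, map_smul, map_one]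

lemma c_basisFun (a : Fin 6) : c (EuclideanSpace.basisFun (Fin 6) ℝ a) = e a := by
  simp [c]

lemma volumeElement_cliffordMul :
    volumeElement cliffordMul (EuclideanSpace.basisFun (Fin 6) ℝ) =
      Matrix.toEuclideanCLM (𝕜 := ℝ) jmat := by
  simp only [volumeElement, cliffordMul_eq_toEuclideanCLM, c_basisFun, List.ofFn_succ,
    List.ofFn_zero, List.prod_cons, List.prod_nil, mul_one, ← map_mul, jmat, mul_assoc]
  rfl

lemma volumeElement_cliffordMul_apply (φ : V8) :
    volumeElement cliffordMul (EuclideanSpace.basisFun (Fin 6) ℝ) φ = act jmat φ := by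
  rw [volumeElement_cliffordMul]
  rfl

theorem spinor_decomposition_dim6 (φ : V8) (hφ : ‖φ‖ = 1) :
    -- φ, jφ and V_φ are pairwise orthogonal
    ⟪φ, act jmat φ⟫ = 0 ∧
    (∀ X : V6, ⟪act (c X) φ, φ⟫ = 0 ∧ ⟪act (c X) φ, act jmat φ⟫ = 0) ∧
    -- X ↦ c(X)φ is injective, so dim V_φ = 6
    Function.Injective (fun X : V6 => act (c X) φ) ∧
    -- the three subspaces together span ℝ⁸
    (∀ ψ : V8, ∃ (a b : ℝ) (X : V6), ψ = a • φ + b • act jmat φ + act (c X) φ) := by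
  simpa only [cliffordMul_apply, volumeElement_cliffordMul_apply] using
    spinor_decomposition_dim6_general isCliffordMap_cliffordMul (EuclideanSpace.basisFun (Fin 6) ℝ)
      rfl finrank_euclideanSpace_fin φ (norm_ne_zero_iff.mp (hφ ▸ one_ne_zero))

end Stmt4
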